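/- Let K ⊂ X be a compact set such that H({x}) = 0 for every x ∈ K. Then H(K) = sup{ H(K_0) : K_0 ⊂ K is compact with H(K_0) < ∞ }. In particular, if H(K) = ∞ then for every 0 < M < ∞ there exists a compact subset K_0 ⊂ K with M < H(K_0) < ∞. -/

import Mathlib

open MeasureTheory Metric Set Filter Topology
open scoped ENNReal NNReal

noncomputable section

universe u

variable {X : Type u} [MetricSpace X] [MeasurableSpace X]

/-- The doubling condition: `0 < μ(B(x,2r)) ≤ C_d · μ(B(x,r)) < ∞` for every ball. -/
def IsDoubling (μ : Measure X) (Cd : ℝ≥0∞) : Prop :=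
  ∀ (x : X) (r : ℝ), 0 < r →
    0 < μ (ball x (2 * r)) ∧ μ (ball x (2 * r)) ≤ Cd * μ (ball x r) ∧
      Cd * μ (ball x r) < ⊤

/-- The codimension-one restricted Hausdorff content `H_R(A)`. -/
def codimHContent (μ : Measure X) (R : ℝ) (A : Set X) : ℝ≥0∞ :=
  ⨅ (c : ℕ → X × ℝ) (_ : A ⊆ ⋃ i, ball (c i).1 (c i).2) (_ : ∀ i, (c i).2 ≤ R),
    ∑' i, μ (ball (c i).1 (c i).2) / ENNReal.ofReal (c i).2

/-- The codimension-one Hausdorff measure `H(A) = lim_{R→0} H_R(A)`. -/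
def codimH (μ : Measure X) (A : Set X) : ℝ≥0∞ :=
  ⨆ (R : ℝ) (_ : 0 < R), codimHContent μ R A

/-- The restricted maximal function `M_R ν(x) = sup_{0<r≤R} r·ν(B(x,r))/μ(B(x,r))`. -/
def maximalFn (μ ν : Measure X) (R : ℝ) (x : X) : ℝ≥0∞ :=
  ⨆ (r : ℝ) (_ : 0 < r) (_ : r ≤ R),
    ENNReal.ofReal r * ν (ball x r) / μ (ball x r)

/-- `|s - t|` for extended-real numbers, interpreted as `∞` whenever at least one of
`s`, `t` is infinite. -/
def eAbsDiff (s t : EReal) : ℝ≥0∞ :=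
  if s = ⊤ ∨ s = ⊥ ∨ t = ⊤ ∨ t = ⊥ then ⊤
  else ENNReal.ofReal |s.toReal - t.toReal|

/-- `g` is an upper gradient of `u` in `Ω`: `g` is a nonnegative Borel function, and for every
nonconstant rectifiable curve `γ` in `Ω` (represented through its 1-Lipschitz (arc-length-type)
parametrizations on compact intervals) with endpoints `x,y` we have
`|u(x) - u(y)| ≤ ∫_γ g ds`. -/
def IsUpperGradientOn (g : X → ℝ≥0∞) (u : X → EReal) (Ω : Set X) : Prop :=
  Measurable g ∧
    ∀ (a b : ℝ), a ≤ b → ∀ γ : ℝ → X, LipschitzOnWith 1 γ (Set.Icc a b) →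
      (∀ t ∈ Set.Icc a b, γ t ∈ Ω) →
      (∃ s ∈ Set.Icc a b, γ s ≠ γ a) →
      eAbsDiff (u (γ a)) (u (γ b)) ≤ ∫⁻ t in Set.Icc a b, g (γ t)

/-- The Newtonian `N^{1,1}` (extended) norm:
`‖u‖_{N^{1,1}} = ‖u‖_{L¹} + inf ‖g‖_{L¹}` over upper gradients `g` of `u`. -/
def eN11 (μ : Measure X) (u : X → ℝ) : ℝ≥0∞ :=
  (∫⁻ x, ENNReal.ofReal |u x| ∂μ) +
    ⨅ (g : X → ℝ≥0∞) (_ : IsUpperGradientOn g (fun x => (u x : EReal)) Set.univ),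
      ∫⁻ x, g x ∂μ

/-- The 1-capacity `capa₁(A) = inf ‖u‖_{N^{1,1}(X)}` over `u ∈ N^{1,1}(X)` with `u ≥ 1` on `A`. -/
def capa1 (μ : Measure X) (A : Set X) : ℝ≥0∞ :=
  ⨅ (u : X → ℝ) (_ : ∀ x ∈ A, 1 ≤ u x), eN11 μ u

/-- The variational 1-capacity `rcapa₁(A,D) = inf ∫_X g_u dμ` over `u ∈ N^{1,1}(X)` with
`u ≥ 1` on `A` and `u = 0` on `X ∖ D`, and upper gradients `g_u` of `u`. -/
def rcapa1 (μ : Measure X) (A D : Set X) : ℝ≥0∞ :=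
  ⨅ (u : X → ℝ) (_ : eN11 μ u < ⊤) (_ : ∀ x ∈ A, 1 ≤ u x)
    (_ : ∀ x, x ∉ D → u x = 0)
    (g : X → ℝ≥0∞) (_ : IsUpperGradientOn g (fun x => (u x : EReal)) Set.univ),
    ∫⁻ x, g x ∂μ

/-- The `(1,1)`-Poincaré inequality:
`⨍_{B(x,r)} |u - u_{B(x,r)}| dμ ≤ C_P · r · ⨍_{B(x,λr)} g dμ`. -/
def PoincareIneq (μ : Measure X) (CP : ℝ≥0∞) (lam : ℝ) : Prop :=
  ∀ (x : X) (r : ℝ), 0 < r → ∀ (u : X → ℝ) (g : X → ℝ≥0∞),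
    LocallyIntegrable u μ →
    IsUpperGradientOn g (fun y => (u y : EReal)) Set.univ →
    (∫⁻ y in ball x r, ENNReal.ofReal |u y - ⨍ z in ball x r, u z ∂μ| ∂μ) / μ (ball x r)
      ≤ CP * ENNReal.ofReal r *
        ((∫⁻ y in ball x (lam * r), g y ∂μ) / μ (ball x (lam * r)))

/-- `A` is 1-thin at `x`:
`lim_{r→0} r · rcapa₁(A ∩ B(x,r), B(x,2r)) / μ(B(x,r)) = 0`. -/
def OneThin (μ : Measure X) (A : Set X) (x : X) : Prop :=
  Tendsto (fun r : ℝ =>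
      ENNReal.ofReal r * rcapa1 μ (A ∩ ball x r) (ball x (2 * r)) / μ (ball x r))
    (𝓝[>] 0) (𝓝 0)

/-- The 1-base `b₁ A`: the set of points where `A` is 1-thick (not 1-thin). -/
def OneBase (μ : Measure X) (A : Set X) : Set X := {x | ¬ OneThin μ A x}

/-- `U` is 1-finely open if `X ∖ U` is 1-thin at every point of `U`. -/
def OneFinelyOpen (μ : Measure X) (U : Set X) : Prop := ∀ x ∈ U, OneThin μ Uᶜ x

/-- `U` is 1-quasiopen if for every `ε > 0` there is an open `G` with `capa₁(G) < ε`
such that `U ∪ G` is open. -/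
def OneQuasiopen (μ : Measure X) (U : Set X) : Prop :=
  ∀ ε : ℝ, 0 < ε → ∃ G : Set X, IsOpen G ∧ capa1 μ G < ENNReal.ofReal ε ∧ IsOpen (U ∪ G)

/-- The 1-fine closure of `D`: the smallest 1-finely closed set containing `D`. -/
def OneFineClosure (μ : Measure X) (D : Set X) : Set X :=
  ⋂₀ {F : Set X | D ⊆ F ∧ OneFinelyOpen μ Fᶜ}

/-- `u` is Lipschitz in every open set compactly contained in `Ω`. -/
def LipschitzLocOn (u : X → ℝ) (Ω : Set X) : Prop :=
  ∀ Ω' : Set X, IsOpen Ω' → IsCompact (closure Ω') → closure Ω' ⊆ Ω →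
    ∃ K : ℝ≥0, LipschitzOnWith K u Ω'

/-- `v i → u` in `L¹_loc(Ω)`. -/
def TendstoL1Loc (μ : Measure X) (Ω : Set X) (v : ℕ → X → ℝ) (u : X → ℝ) : Prop :=
  ∀ K : Set X, K ⊆ Ω → IsCompact K →
    Tendsto (fun i => ∫⁻ x in K, ENNReal.ofReal |v i x - u x| ∂μ) atTop (𝓝 0)

/-- The total variation `‖Du‖(Ω)` of `u` in `Ω`. -/
def totalVar (μ : Measure X) (u : X → ℝ) (Ω : Set X) : ℝ≥0∞ :=
  ⨅ (v : ℕ → X → ℝ) (g : ℕ → X → ℝ≥0∞)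
    (_ : ∀ i, LipschitzLocOn (v i) Ω)
    (_ : ∀ i, IsUpperGradientOn (g i) (fun x => (v i x : EReal)) Ω)
    (_ : TendstoL1Loc μ Ω v u),
    liminf (fun i => ∫⁻ x in Ω, g i x ∂μ) atTop

/-- The (extended) BV norm `‖u‖_{BV(X)} = ‖u‖_{L¹(X)} + ‖Du‖(X)`. -/
def eBV (μ : Measure X) (u : X → ℝ) : ℝ≥0∞ :=
  (∫⁻ x, ENNReal.ofReal |u x| ∂μ) + totalVar μ u Set.univ

/-- `u ∈ BV(X)`: `u ∈ L¹(X)` and `‖Du‖(X) < ∞`. -/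
def MemBV (μ : Measure X) (u : X → ℝ) : Prop := eBV μ u < ⊤

/-- The BV-capacity `capa_BV(A) = inf ‖u‖_{BV(X)}` over `u ∈ BV(X)` with `u ≥ 1`
in a neighborhood of `A`. -/
def capaBV (μ : Measure X) (A : Set X) : ℝ≥0∞ :=
  ⨅ (u : X → ℝ) (_ : ∃ V : Set X, IsOpen V ∧ A ⊆ V ∧ ∀ x ∈ V, 1 ≤ u x), eBV μ u

/-- The lower approximate limit `u^∧(x)`. -/
def lowerApprox (μ : Measure X) (u : X → ℝ) (x : X) : EReal :=
  sSup ((fun s : ℝ => (s : EReal)) ''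
    {s | Tendsto (fun r : ℝ => μ (ball x r ∩ {y | u y < s}) / μ (ball x r)) (𝓝[>] 0) (𝓝 0)})

/-- The support of a (μ-a.e. defined) function `u`. -/
def suppOf (μ : Measure X) (u : X → ℝ) : Set X :=
  {x | ∀ r : ℝ, 0 < r → 0 < μ ({y | u y ≠ 0} ∩ ball x r)}

/-!
Nets of `K` at the scales `2⁻ᵏ`, each point joined to a nearest point of the previous net, form a
tree whose branches are a compact space mapping onto `K`. Doubling shows that, up to powers of
`Cd`, the content at scale `2⁻ᵐ` corresponds on branches to the content `H m` that only uses
coverings by cylinders of level `≥ m`. Being the largest outer measure with prescribed bounds on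
these cylinders, `H k` is additive over the cylinders of level `k`, and inside such a cylinder it is
the minimum of the weight of the cylinder and `H (k + 1)`.

Start from the space of all branches, with `m` so large that `H m` is large on it. As points are
null, an intermediate value argument trims a compact set inside each cylinder of level `k` until
`H (k + 1)` is almost `H k` there; since `H k` itself is not diminished on these cylinders, neither
is `H m`. Trimming successively at the levels `m, m + 1, …` gives a decreasing sequence of compact
sets. On its intersection `H m` is still large, because `H m` is outer regular, while `⨆ k, H k` is
at most the finite initial value of `H m` plus a small error.
-/

section OuterMeasure

variable {Ω : Type*}

/-- The truncation `A ↦ min b (ν A)` of an outer measure `ν` at height `b`. -/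
def truncatedOuterMeasure (b : ℝ≥0∞) (ν : OuterMeasure Ω) : OuterMeasure Ω where
  measureOf A := min b (ν A)
  empty := by simp
  mono h := min_le_min_left _ (measure_mono h)
  iUnion_nat s _ := by
    by_cases! hs : ∃ n, b ≤ ν (s n)
    · obtain ⟨n, hn⟩ := hs
      calc min b (ν (⋃ i, s i)) ≤ min b (ν (s n)) := by simp [hn]
        _ ≤ ∑' i, min b (ν (s i)) := ENNReal.le_tsum n
    · calc min b (ν (⋃ i, s i)) ≤ ∑' i, ν (s i) := (min_le_right _ _).trans (measure_iUnion_le s)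
        _ = ∑' i, min b (ν (s i)) := by simp only [min_eq_right (hs _).le]

theorem truncatedOuterMeasure_apply (b : ℝ≥0∞) (ν : OuterMeasure Ω) (A : Set Ω) :
    truncatedOuterMeasure b ν A = min b (ν A) :=
  rfl

variable [TopologicalSpace Ω]

theorem exists_isCompact_subset_le_outerMeasure_le_add_of_subset_biUnion {κ : Type*}
    (ν : OuterMeasure Ω) {b ε : ℝ≥0∞} (t : Finset κ) (U : κ → Set Ω) (hU : ∀ i ∈ t, IsOpen (U i))
    (hνU : ∀ i ∈ t, ν (U i) ≤ ε) {A : Set Ω} (hA : IsCompact A) (hAU : A ⊆ ⋃ i ∈ t, U i)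
    (hb : b ≤ ν A) : ∃ A' ⊆ A, IsCompact A' ∧ b ≤ ν A' ∧ ν A' ≤ b + ε := by
  classical
  induction t using Finset.induction_on generalizing A with
  | empty =>
    obtain rfl : A = ∅ := by simpa using hAU
    exact ⟨∅, subset_rfl, hA, hb, by simp⟩
  | insert i t _ ih =>
    rw [Finset.forall_mem_insert] at hU hνU
    rw [Finset.set_biUnion_insert] at hAU
    rcases le_total b (ν (A \ U i)) with h | h
    · obtain ⟨A', hA'A, hA'⟩ := ih hU.2 hνU.2 (hA.diff hU.1) (sdiff_subset_iff.2 hAU) h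
      exact ⟨A', hA'A.trans sdiff_subset, hA'⟩
    · refine ⟨A, subset_rfl, hA, hb, ?_⟩
      calc ν A ≤ ν (A \ U i ∪ U i) := measure_mono (by simp)
        _ ≤ ν (A \ U i) + ν (U i) := measure_union_le _ _
        _ ≤ b + ε := add_le_add h hνU.1

theorem exists_isCompact_subset_le_outerMeasure_le_add (ν : OuterMeasure Ω) {b ε : ℝ≥0∞}
    {A : Set Ω} (hA : IsCompact A) (hsmall : ∀ x ∈ A, ∃ U, x ∈ U ∧ IsOpen U ∧ ν U ≤ ε)
    (hb : b ≤ ν A) : ∃ A' ⊆ A, IsCompact A' ∧ b ≤ ν A' ∧ ν A' ≤ b + ε := by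
  choose! U hxU hU hνU using hsmall
  obtain ⟨t, htA, ht⟩ := hA.elim_nhds_subcover U fun x hx => (hU x hx).mem_nhds (hxU x hx)
  exact exists_isCompact_subset_le_outerMeasure_le_add_of_subset_biUnion ν t U
    (fun x hx => hU x (htA x hx)) (fun x hx => hνU x (htA x hx)) hA ht hb

end OuterMeasure

section CylinderContent

variable {Ω : Type*} {ι : ℕ → Type*}

/-- The largest outer measure that is at most `w k i` on each cylinder `p k ⁻¹' {i}` of level
`k ≥ m`. It is the content obtained from countable coverings by such cylinders; as cylinders
of small diameter are those of high level, `m → ∞` plays the role of `R → 0` in `codimH`. -/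
def cylinderContent (p : ∀ k, Ω → ι k) (w : ∀ k, ι k → ℝ≥0∞) (m : ℕ) : OuterMeasure Ω :=
  sSup {ν | ∀ k ≥ m, ∀ i, ν (p k ⁻¹' {i}) ≤ w k i}

variable {p : ∀ k, Ω → ι k} {w : ∀ k, ι k → ℝ≥0∞} {m n k : ℕ}

theorem le_cylinderContent {ν : OuterMeasure Ω} (h : ∀ k ≥ m, ∀ i, ν (p k ⁻¹' {i}) ≤ w k i)
    (A : Set Ω) : ν A ≤ cylinderContent p w m A :=
  le_sSup (show ν ∈ {ν | ∀ k ≥ m, ∀ i, ν (p k ⁻¹' {i}) ≤ w k i} from h) A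

theorem le_mul_cylinderContent {ν : OuterMeasure Ω} {C : ℝ≥0∞} (hC₀ : C ≠ 0) (hC : C ≠ ⊤)
    (h : ∀ k ≥ m, ∀ i, ν (p k ⁻¹' {i}) ≤ C * w k i) (A : Set Ω) :
    ν A ≤ C * cylinderContent p w m A := by
  rw [← ENNReal.inv_mul_le_iff hC₀ hC]
  exact le_cylinderContent (ν := C⁻¹ • ν)
    (fun k hk i => (ENNReal.inv_mul_le_iff hC₀ hC).2 (h k hk i)) A

theorem cylinderContent_cylinder_le (h : m ≤ k) (i : ι k) :
    cylinderContent p w m (p k ⁻¹' {i}) ≤ w k i := by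
  rw [cylinderContent, OuterMeasure.sSup_apply]
  exact iSup₂_le fun ν hν => hν k h i

theorem cylinderContent_mono_level (h : m ≤ n) (A : Set Ω) :
    cylinderContent p w m A ≤ cylinderContent p w n A :=
  le_cylinderContent (fun _ hk i => cylinderContent_cylinder_le (h.trans hk) i) A

theorem cylinderContent_le_tsum [Countable (ι k)] (h : m ≤ k) {A : Set Ω} {Q : Set (ι k)}
    (hQ : MapsTo (p k) A Q) : cylinderContent p w m A ≤ ∑' i : Q, w k i :=
  calc cylinderContent p w m A ≤ cylinderContent p w m (⋃ i ∈ Q, p k ⁻¹' {i}) :=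
        measure_mono fun _ hx => mem_biUnion (hQ hx) rfl
    _ ≤ ∑' i : Q, cylinderContent p w m (p k ⁻¹' {(i : ι k)}) :=
        measure_biUnion_le (cylinderContent p w m) Q.to_countable fun i => p k ⁻¹' {i}
    _ ≤ ∑' i : Q, w k i := ENNReal.tsum_le_tsum fun i => cylinderContent_cylinder_le h (i : ι k)

theorem cylinderContent_lt_top [Finite (ι m)] (hw : ∀ i, w m i ≠ ⊤) (A : Set Ω) :
    cylinderContent p w m A < ⊤ := by
  have := Fintype.ofFinite (ι m)
  calc cylinderContent p w m A ≤ ∑' i : (univ : Set (ι m)), w m i :=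
        cylinderContent_le_tsum le_rfl (mapsTo_univ _ _)
    _ = ∑ i, w m i := by rw [tsum_univ, tsum_fintype]
    _ < ⊤ := ENNReal.sum_lt_top.2 fun i _ => (hw i).lt_top

theorem cylinderContent_eq_min {A : Set Ω} {i : ι k} (hA : A ⊆ p k ⁻¹' {i}) :
    cylinderContent p w k A = min (w k i) (cylinderContent p w (k + 1) A) := by
  refine le_antisymm (le_min ?_ (cylinderContent_mono_level k.le_succ A)) ?_
  · exact (measure_mono hA).trans (cylinderContent_cylinder_le le_rfl i)
  -- This outer measure satisfies the bounds that `cylinderContent p w k` is the largest to satisfy.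
  let ν := truncatedOuterMeasure (w k i) (OuterMeasure.restrict A (cylinderContent p w (k + 1)))
  have hν (l : ℕ) (hl : l ≥ k) (j : ι l) : ν (p l ⁻¹' {j}) ≤ w l j := by
    simp only [ν, truncatedOuterMeasure_apply, OuterMeasure.restrict_apply]
    rcases hl.eq_or_lt with rfl | hl
    · rcases eq_or_ne i j with rfl | hij
      · exact min_le_left _ _
      · have : p k ⁻¹' {j} ∩ A = ∅ :=
          ((disjoint_singleton.2 hij.symm).preimage (p k)).mono_right hA |>.inter_eq
        simp [this]
    · exact (min_le_right _ _).trans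
        ((measure_mono inter_subset_left).trans (cylinderContent_cylinder_le hl j))
  simpa [ν, truncatedOuterMeasure_apply] using le_cylinderContent hν A

theorem cylinder_inter_cylinder_eq_or_eq_empty (hp : Antitone fun k => Setoid.ker (p k))
    (h : m ≤ k) (i : ι m) (j : ι k) :
    p m ⁻¹' {i} ∩ p k ⁻¹' {j} = p k ⁻¹' {j} ∨ p m ⁻¹' {i} ∩ p k ⁻¹' {j} = ∅ := by
  refine or_iff_not_imp_right.2 fun hne => inter_eq_right.2 fun y hy => ?_
  obtain ⟨x, hxi, hxj⟩ := nonempty_iff_ne_empty.2 hne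
  have hyx : p m y = p m x := hp h (show p k y = p k x from hy.trans hxj.symm)
  exact hyx.trans hxi

theorem cylinderContent_eq_tsum_inter [Countable (ι k)] (hp : Antitone fun k => Setoid.ker (p k))
    (A : Set Ω) :
    cylinderContent p w k A = ∑' i, cylinderContent p w k (A ∩ p k ⁻¹' {i}) := by
  refine le_antisymm ?_ ?_
  · calc cylinderContent p w k A ≤ cylinderContent p w k (⋃ i, A ∩ p k ⁻¹' {i}) :=
          measure_mono fun x hx => mem_iUnion.2 ⟨p k x, hx, rfl⟩
      _ ≤ ∑' i, cylinderContent p w k (A ∩ p k ⁻¹' {i}) := measure_iUnion_le _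
  let ν := OuterMeasure.sum fun i => OuterMeasure.restrict (p k ⁻¹' {i}) (cylinderContent p w k)
  have hν (l : ℕ) (hl : l ≥ k) (j : ι l) : ν (p l ⁻¹' {j}) ≤ w l j := by
    simp only [ν, OuterMeasure.sum_apply, OuterMeasure.restrict_apply]
    rcases (p l ⁻¹' {j}).eq_empty_or_nonempty with hj | ⟨x, hx⟩
    · simp [hj]
    rw [tsum_eq_single (p k x)]
    · exact (measure_mono inter_subset_left).trans (cylinderContent_cylinder_le hl j)
    · intro i hi
      have hij := (cylinder_inter_cylinder_eq_or_eq_empty hp hl i j).resolve_left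
        fun h => hi (inter_eq_right.1 h hx).symm
      rw [inter_comm, hij, measure_empty]
  simpa [ν] using le_cylinderContent hν A

theorem cylinderContent_le_of_forall_inter_le [∀ k, Countable (ι k)]
    (hp : Antitone fun k => Setoid.ker (p k)) {F F' : Set Ω} (hmk : m ≤ k)
    (h : ∀ i, cylinderContent p w k (F ∩ p k ⁻¹' {i}) ≤
      cylinderContent p w k (F' ∩ p k ⁻¹' {i})) :
    cylinderContent p w m F ≤ cylinderContent p w m F' := by
  induction k, hmk using Nat.le_induction with
  | base =>
    rw [cylinderContent_eq_tsum_inter hp F, cylinderContent_eq_tsum_inter hp F']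
    exact ENNReal.tsum_le_tsum h
  | succ k _ ih =>
    refine ih fun i => ?_
    rw [cylinderContent_eq_min inter_subset_right, cylinderContent_eq_min inter_subset_right,
      cylinderContent_eq_tsum_inter (k := k + 1) hp (F ∩ _),
      cylinderContent_eq_tsum_inter (k := k + 1) hp (F' ∩ _)]
    refine min_le_min_left _ (ENNReal.tsum_le_tsum fun j => ?_)
    rw [inter_assoc, inter_assoc]
    rcases cylinder_inter_cylinder_eq_or_eq_empty hp k.le_succ i j with hij | hij
    · rw [hij]
      exact h j
    · simp [hij]

variable [TopologicalSpace Ω]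

theorem exists_isOpen_superset_cylinderContent_lt (hlc : ∀ k, IsLocallyConstant (p k)) {A : Set Ω}
    {a : ℝ≥0∞} (h : cylinderContent p w m A < a) :
    ∃ U ⊇ A, IsOpen U ∧ cylinderContent p w m U < a := by
  let ν : OuterMeasure Ω := inducedOuterMeasure
    (fun (U : Set Ω) (_ : IsOpen U) => cylinderContent p w m U) isOpen_empty measure_empty
  have hν (k : ℕ) (hk : k ≥ m) (i : ι k) : ν (p k ⁻¹' {i}) ≤ w k i :=
    (inducedOuterMeasure_eq' (fun _ h => isOpen_iUnion h) (fun _ _ => measure_iUnion_le _)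
      (fun _ _ _ _ h => measure_mono h) ((hlc k).isOpen_fiber i)).trans_le
        (cylinderContent_cylinder_le hk i)
  have hνA : ν A < a := (le_cylinderContent hν A).trans_lt h
  rw [inducedOuterMeasure_eq_iInf (PU := fun _ h => isOpen_iUnion h)
    (msU := fun _ _ => measure_iUnion_le _) (m_mono := fun _ _ _ _ h => measure_mono h)] at hνA
  simp only [iInf_lt_iff] at hνA
  obtain ⟨U, hU, hAU, hUa⟩ := hνA
  exact ⟨U, hAU, hU, hUa⟩

theorem exists_isCompact_subset_cylinderContent_succ_le_add [Finite (ι k)]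
    (hp : Antitone fun k => Setoid.ker (p k)) (hlc : ∀ k, IsLocallyConstant (p k))
    {F : Set Ω} (hF : IsCompact F) (h₀ : ∀ x ∈ F, cylinderContent p w (k + 1) {x} = 0)
    {δ : ℝ≥0∞} (hδ : δ ≠ 0) :
    ∃ F' ⊆ F, IsCompact F' ∧
      (∀ i, cylinderContent p w k (F ∩ p k ⁻¹' {i}) ≤ cylinderContent p w k (F' ∩ p k ⁻¹' {i})) ∧
      cylinderContent p w (k + 1) F' ≤ cylinderContent p w k F + δ := by
  obtain ⟨ε, hε, hεδ⟩ := ENNReal.exists_pos_sum_of_countable' hδ (ι k)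
  have key (i : ι k) : ∃ A' ⊆ F ∩ p k ⁻¹' {i}, IsCompact A' ∧
      cylinderContent p w k (F ∩ p k ⁻¹' {i}) ≤ cylinderContent p w (k + 1) A' ∧
      cylinderContent p w (k + 1) A' ≤ cylinderContent p w k (F ∩ p k ⁻¹' {i}) + ε i := by
    refine exists_isCompact_subset_le_outerMeasure_le_add _
      (hF.inter_right ((hlc k).isClosed_fiber i)) (fun x hx => ?_)
      (cylinderContent_mono_level k.le_succ _)
    obtain ⟨U, hxU, hU, hUε⟩ := exists_isOpen_superset_cylinderContent_lt hlc
      ((h₀ x hx.1).trans_lt (hε i))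
    exact ⟨U, hxU rfl, hU, hUε.le⟩
  choose A' hA'F hA' hle hle_add using key
  refine ⟨⋃ i, A' i, iUnion_subset fun i => (hA'F i).trans inter_subset_left,
    isCompact_iUnion hA', fun i => ?_, ?_⟩
  · calc cylinderContent p w k (F ∩ p k ⁻¹' {i})
        ≤ min (w k i) (cylinderContent p w (k + 1) (A' i)) :=
          le_min ((measure_mono inter_subset_right).trans (cylinderContent_cylinder_le le_rfl i))
            (hle i)
      _ = cylinderContent p w k (A' i) :=
          (cylinderContent_eq_min ((hA'F i).trans inter_subset_right)).symm
      _ ≤ cylinderContent p w k ((⋃ i, A' i) ∩ p k ⁻¹' {i}) :=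
          measure_mono (subset_inter (subset_iUnion A' i) ((hA'F i).trans inter_subset_right))
  · calc cylinderContent p w (k + 1) (⋃ i, A' i)
        ≤ ∑' i, cylinderContent p w (k + 1) (A' i) := measure_iUnion_le A'
      _ ≤ ∑' i, (cylinderContent p w k (F ∩ p k ⁻¹' {i}) + ε i) := ENNReal.tsum_le_tsum hle_add
      _ = cylinderContent p w k F + ∑' i, ε i := by
          rw [ENNReal.tsum_add, ← cylinderContent_eq_tsum_inter hp]
      _ ≤ cylinderContent p w k F + δ := by gcongr

theorem exists_antitone_isCompact_cylinderContent_le_add [∀ k, Finite (ι k)]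
    (hp : Antitone fun k => Setoid.ker (p k)) (hlc : ∀ k, IsLocallyConstant (p k))
    {A : Set Ω} (hA : IsCompact A) (h₀ : ∀ k, ∀ x ∈ A, cylinderContent p w k {x} = 0)
    (m : ℕ) {δ : ℝ≥0∞} (hδ : δ ≠ 0) :
    ∃ F : ℕ → Set Ω, Antitone F ∧ ∀ j, F j ⊆ A ∧ IsCompact (F j) ∧
      cylinderContent p w m A ≤ cylinderContent p w m (F j) ∧
      cylinderContent p w (m + j) (F j) ≤ cylinderContent p w m A + δ := by
  obtain ⟨ε, hε, hεδ⟩ := ENNReal.exists_pos_sum_of_countable' hδ ℕ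
  have step (j : ℕ) (F : Set Ω) (hF : IsCompact F ∧ F ⊆ A) :=
    exists_isCompact_subset_cylinderContent_succ_le_add (k := m + j) hp hlc hF.1
      (fun x hx => h₀ _ x (hF.2 hx)) (hε j).ne'
  choose! G hGF hG hle hle_add using step
  let F : ℕ → Set Ω := Nat.rec A G
  have hF (j : ℕ) : IsCompact (F j) ∧ F j ⊆ A := by
    induction j with
    | zero => exact ⟨hA, subset_rfl⟩
    | succ j ih => exact ⟨hG j _ ih, (hGF j _ ih).trans ih.2⟩
  refine ⟨F, antitone_nat_of_succ_le fun j => hGF j _ (hF j),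
    fun j => ⟨(hF j).2, (hF j).1, ?_, ?_⟩⟩
  · induction j with
    | zero => exact le_rfl
    | succ j ih =>
      exact ih.trans (cylinderContent_le_of_forall_inter_le hp (m.le_add_right j) (hle j _ (hF j)))
  · have hsum : cylinderContent p w (m + j) (F j) ≤
        cylinderContent p w m A + ∑ i ∈ Finset.range j, ε i := by
      induction j with
      | zero => simp [F]
      | succ j ih =>
        rw [Finset.sum_range_succ, ← add_assoc (cylinderContent p w m A)]
        exact (hle_add j _ (hF j)).trans (add_le_add_left ih _)
    exact hsum.trans (by gcongr; exact (ENNReal.sum_le_tsum _).trans hεδ.le)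

theorem exists_isCompact_subset_iSup_cylinderContent_le_add [T2Space Ω] [∀ k, Finite (ι k)]
    (hp : Antitone fun k => Setoid.ker (p k)) (hlc : ∀ k, IsLocallyConstant (p k))
    {A : Set Ω} (hA : IsCompact A) (h₀ : ∀ k, ∀ x ∈ A, cylinderContent p w k {x} = 0)
    (m : ℕ) {δ : ℝ≥0∞} (hδ : δ ≠ 0) :
    ∃ F ⊆ A, IsCompact F ∧ cylinderContent p w m A ≤ cylinderContent p w m F ∧
      ⨆ k, cylinderContent p w k F ≤ cylinderContent p w m A + δ := by
  obtain ⟨F, hanti, hF⟩ := exists_antitone_isCompact_cylinderContent_le_add hp hlc hA h₀ m hδ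
  choose hFA hFc hle hle_add using hF
  refine ⟨⋂ j, F j, iInter_subset_of_subset 0 (hFA 0),
    (hFc 0).of_isClosed_subset (isClosed_iInter fun j => (hFc j).isClosed) (iInter_subset F 0),
    ?_, iSup_le fun k => ?_⟩
  · by_contra! hlt
    obtain ⟨U, hFU, hU, hUlt⟩ := exists_isOpen_superset_cylinderContent_lt hlc hlt
    obtain ⟨j, hj⟩ := exists_subset_nhds_of_isCompact hanti.directed_ge hFc
      fun _ hx => hU.mem_nhds (hFU hx)
    exact hUlt.not_ge ((hle j).trans (measure_mono hj))
  · calc cylinderContent p w k (⋂ j, F j) ≤ cylinderContent p w (m + k) (F k) :=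
          (cylinderContent_mono_level (k.le_add_left m) _).trans (measure_mono (iInter_subset F k))
      _ ≤ cylinderContent p w m A + δ := hle_add k

end CylinderContent

section Nets

theorem exists_thread_of_surjective {N : ℕ → Type*} {f : ∀ k, N (k + 1) → N k}
    (hf : ∀ k, Function.Surjective (f k)) (m : ℕ) (y : N m) :
    ∃ ω : ∀ k, N k, (∀ k, f k (ω (k + 1)) = ω k) ∧ ω m = y := by
  induction m generalizing N with
  | zero =>
    exact ⟨Nat.rec y fun k => Function.surjInv (hf k), fun k => Function.surjInv_eq (hf k) _, rfl⟩
  | succ m ih =>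
    obtain ⟨ω, hω, hωm⟩ := ih (fun k => hf (k + 1)) y
    exact ⟨Nat.rec (f 0 (ω 0)) fun k _ => ω k, Nat.rec rfl fun k _ => hω k, hωm⟩

variable {Y : Type*} [MetricSpace Y] {K : Set Y}

theorem exists_finite_net_of_totallyBounded (hK : TotallyBounded K) {ε : ℝ} (hε : 0 < ε) :
    ∃ N ⊆ K, N.Finite ∧ (N.Pairwise fun a b => ε < dist a b) ∧
      ∀ x ∈ K, ∃ a ∈ N, dist x a ≤ ε := by
  lift ε to ℝ≥0 using hε.le
  have hpack : packingNumber ε K ≠ ⊤ := by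
    obtain ⟨N, hNK, hN, hcover⟩ :=
      exists_finite_isCover_of_totallyBounded (half_pos (NNReal.coe_pos.1 hε)).ne' hK
    refine ne_top_of_le_ne_top (encard_ne_top_iff.2 hN) ?_
    calc packingNumber ε K = packingNumber (2 * (ε / 2)) K := by
          rw [mul_div_cancel₀ ε two_ne_zero]
      _ ≤ externalCoveringNumber (ε / 2) K := packingNumber_two_mul_le_externalCoveringNumber _ K
      _ ≤ coveringNumber (ε / 2) K := externalCoveringNumber_le_coveringNumber _ K
      _ ≤ N.encard := hcover.coveringNumber_le_encard hNK
  refine ⟨maximalSeparatedSet ε K, maximalSeparatedSet_subset, ?_, fun a ha b hb hab => ?_,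
    fun x hx => ?_⟩
  · rwa [← encard_ne_top_iff, encard_maximalSeparatedSet hpack]
  · have : (ε : ℝ≥0∞) < edist a b := isSeparated_maximalSeparatedSet ha hb hab
    rwa [edist_nndist, ENNReal.coe_lt_coe, ← NNReal.coe_lt_coe, coe_nndist] at this
  · obtain ⟨a, ha, hxa⟩ := isCover_maximalSeparatedSet hpack hx
    have : edist x a ≤ (ε : ℝ≥0∞) := hxa
    rw [edist_nndist, ENNReal.coe_le_coe, ← NNReal.coe_le_coe, coe_nndist] at this
    exact ⟨a, ha, this⟩

/-- Nets of `K` at the scales `(1 / 2) ^ k`, organized as a tree: the parent of a point of one net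
is a nearest point of the previous net. -/
structure NetTree (K : Set Y) where
  net : ℕ → Set Y
  net_subset (k : ℕ) : net k ⊆ K
  finite_net (k : ℕ) : (net k).Finite
  pairwise_lt_dist (k : ℕ) : (net k).Pairwise fun a b => (1 / 2) ^ k < dist a b
  exists_dist_le (k : ℕ) : ∀ x ∈ K, ∃ a ∈ net k, dist x a ≤ (1 / 2) ^ k
  parent (k : ℕ) : net (k + 1) → net k
  dist_parent_le_dist (k : ℕ) (z : net (k + 1)) (y : net k) :
    dist (z : Y) (parent k z) ≤ dist (z : Y) y

namespace NetTree

theorem nonempty_of_totallyBounded (hK : TotallyBounded K) : Nonempty (NetTree K) := by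
  choose N hNK hfin hsep hcover using fun k : ℕ =>
    exists_finite_net_of_totallyBounded hK (pow_pos (one_half_pos (α := ℝ)) k)
  have nearest (k : ℕ) (z : N (k + 1)) : ∃ a : N k, ∀ y : N k, dist (z : Y) a ≤ dist (z : Y) y := by
    obtain ⟨a, ha, -⟩ := hcover k z (hNK _ z.2)
    obtain ⟨b, hb, hmin⟩ := exists_min_image (N k) (dist (z : Y)) (hfin k) ⟨a, ha⟩
    exact ⟨⟨b, hb⟩, fun y => hmin y y.2⟩
  choose par hpar using nearest
  exact ⟨⟨N, hNK, hfin, hsep, hcover, par, hpar⟩⟩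

variable (T : NetTree K) {k : ℕ}

instance : Finite (T.net k) := (T.finite_net k).to_subtype

theorem dist_parent_le (z : T.net (k + 1)) : dist (z : Y) (T.parent k z) ≤ (1 / 2) ^ k := by
  obtain ⟨a, ha, hza⟩ := T.exists_dist_le k z (T.net_subset _ z.2)
  exact (T.dist_parent_le_dist k z ⟨a, ha⟩).trans hza

-- A net point of level `k + 1` close to `y` has `y` as its parent, as any other net point of level
-- `k` is too far from `y` to be nearest.
theorem parent_surjective (k : ℕ) : Function.Surjective (T.parent k) := by
  intro y
  obtain ⟨z, hz, hyz⟩ := T.exists_dist_le (k + 1) y (T.net_subset k y.2)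
  refine ⟨⟨z, hz⟩, by_contra fun hne => ?_⟩
  have hlt := T.pairwise_lt_dist k (T.parent k ⟨z, hz⟩).2 y.2 (Subtype.coe_injective.ne hne)
  have hnear : dist z (T.parent k ⟨z, hz⟩) ≤ dist z y := T.dist_parent_le_dist k ⟨z, hz⟩ y
  have htri := dist_triangle_left (T.parent k ⟨z, hz⟩ : Y) y z
  rw [dist_comm, pow_succ] at hyz
  linarith

/-- The infinite branches of the tree, i.e. the inverse limit of the nets along the parent maps. -/
def branches : Set (∀ k, T.net k) := {ω | ∀ k, T.parent k (ω (k + 1)) = ω k}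

instance : CompactSpace T.branches := by
  refine isCompact_iff_compactSpace.1 (IsClosed.isCompact ?_)
  simp only [branches, ofPred_forall]
  exact isClosed_iInter fun k => isClosed_eq
    (continuous_of_discreteTopology.comp (continuous_apply (k + 1))) (continuous_apply k)

/-- The node of level `k` on a branch. These are the projections `p k` to which `cylinderContent`
is applied. -/
def node (k : ℕ) (ω : T.branches) : T.net k := ω.1 k

theorem parent_node (k : ℕ) (ω : T.branches) : T.parent k (T.node (k + 1) ω) = T.node k ω :=
  ω.2 k

theorem antitone_ker_node : Antitone fun k => Setoid.ker (T.node k) :=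
  antitone_nat_of_succ_le fun k ω ω' (h : T.node (k + 1) ω = T.node (k + 1) ω') =>
    show T.node k ω = T.node k ω' by rw [← parent_node, h, parent_node]

theorem isLocallyConstant_node (k : ℕ) : IsLocallyConstant (T.node k) :=
  (IsLocallyConstant.iff_continuous _).2
    (show Continuous fun ω : T.branches => ω.1 k from
      (continuous_apply k).comp continuous_subtype_val)

theorem dist_node_succ_le (k : ℕ) (ω : T.branches) :
    dist (T.node k ω : Y) (T.node (k + 1) ω) ≤ 1 * (1 / 2) ^ k := by
  rw [← parent_node, dist_comm, one_mul]
  exact T.dist_parent_le _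

/-- The point to which a branch converges; it exists when `K` is complete. -/
def limit (ω : T.branches) : Y :=
  have : Nonempty Y := ⟨T.node 0 ω⟩
  limUnder atTop fun k => (T.node k ω : Y)

variable {T}

theorem tendsto_node_limit (hK : IsComplete K) (ω : T.branches) :
    Tendsto (fun k => (T.node k ω : Y)) atTop (𝓝 (T.limit ω)) := by
  obtain ⟨x, -, hx⟩ := cauchySeq_tendsto_of_isComplete hK
    (fun k => T.net_subset k (T.node k ω).2)
    (cauchySeq_of_le_geometric (1 / 2) 1 (by norm_num) fun k => T.dist_node_succ_le k ω)
  exact tendsto_nhds_limUnder ⟨x, hx⟩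

theorem dist_node_limit_le (hK : IsComplete K) (k : ℕ) (ω : T.branches) :
    dist (T.node k ω : Y) (T.limit ω) ≤ 2 * (1 / 2) ^ k :=
  (dist_le_of_le_geometric_of_tendsto (1 / 2) 1 (by norm_num) (fun k => T.dist_node_succ_le k ω)
    (tendsto_node_limit hK ω) k).trans_eq (by ring)

theorem continuous_limit (hK : IsComplete K) : Continuous T.limit := by
  have hunif : TendstoUniformly (fun k ω => (T.node k ω : Y)) T.limit atTop := by
    have hscale : Tendsto (fun k : ℕ => 2 * (1 / 2 : ℝ) ^ k) atTop (𝓝 0) := by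
      simpa using (tendsto_pow_atTop_nhds_zero_of_lt_one (r := (1 / 2 : ℝ)) (by norm_num)
        (by norm_num)).const_mul 2
    refine Metric.tendstoUniformly_iff.2 fun ε hε => ?_
    filter_upwards [hscale.eventually_lt_const hε] with k hk ω
    rw [dist_comm]
    exact (dist_node_limit_le hK k ω).trans_lt hk
  exact hunif.continuous (Eventually.of_forall fun k =>
    continuous_subtype_val.comp (T.isLocallyConstant_node k).continuous).frequently

theorem range_limit (hK : IsComplete K) : range T.limit = K := by
  refine Subset.antisymm ?_ fun x hx => ?_
  · rintro _ ⟨ω, rfl⟩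
    exact hK.isClosed.mem_of_tendsto (tendsto_node_limit hK ω)
      (Eventually.of_forall fun k => T.net_subset k (T.node k ω).2)
  have hclosed : IsClosed (range T.limit) := (isCompact_range (continuous_limit hK)).isClosed
  refine hclosed.closure_subset (Metric.mem_closure_range_iff.2 fun ε hε => ?_)
  obtain ⟨k, hk⟩ := exists_pow_lt_of_lt_one (show 0 < ε / 3 by positivity) one_half_lt_one
  obtain ⟨a, ha, hxa⟩ := T.exists_dist_le k x hx
  obtain ⟨ω, hω, hωk⟩ := exists_thread_of_surjective T.parent_surjective k ⟨a, ha⟩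
  have hlim := dist_node_limit_le hK k ⟨ω, hω⟩
  simp only [node, hωk] at hlim
  exact ⟨⟨ω, hω⟩, by linarith [dist_triangle x a (T.limit ⟨ω, hω⟩)]⟩

end NetTree

end Nets

section Doubling

variable {μ : Measure X} {Cd : ℝ≥0∞} {r ρ R : ℝ}

namespace IsDoubling

theorem measure_ball_pos (h : IsDoubling μ Cd) (x : X) (hr : 0 < r) : 0 < μ (ball x r) := by
  simpa [mul_div_cancel₀] using (h x (r / 2) (half_pos hr)).1

theorem measure_ball_lt_top (h : IsDoubling μ Cd) (x : X) (hr : 0 < r) : μ (ball x r) < ⊤ := by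
  obtain ⟨-, hle, hlt⟩ := h x (r / 2) (half_pos hr)
  rw [mul_div_cancel₀ r two_ne_zero] at hle
  exact hle.trans_lt hlt

theorem one_le [Nonempty X] (h : IsDoubling μ Cd) : 1 ≤ Cd := by
  inhabit X
  have hle : μ (ball default 1) ≤ Cd * μ (ball default 1) :=
    (measure_mono (ball_subset_ball (by norm_num))).trans (h default 1 one_pos).2.1
  rw [← one_mul (μ (ball default 1)), ← mul_assoc, mul_one] at hle
  exact (ENNReal.mul_le_mul_iff_left (h.measure_ball_pos default one_pos).ne'
    (h.measure_ball_lt_top default one_pos).ne).1 hle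

theorem ne_top [Nonempty X] (h : IsDoubling μ Cd) : Cd ≠ ⊤ := by
  inhabit X
  rintro rfl
  exact (h default 1 one_pos).2.2.ne
    (ENNReal.top_mul (h.measure_ball_pos default one_pos).ne')

theorem measure_ball_two_pow_mul_le (h : IsDoubling μ Cd) (x : X) (hr : 0 < r) (n : ℕ) :
    μ (ball x (2 ^ n * r)) ≤ Cd ^ n * μ (ball x r) := by
  induction n with
  | zero => simp
  | succ n ih =>
    calc μ (ball x (2 ^ (n + 1) * r)) = μ (ball x (2 * (2 ^ n * r))) := by ring_nf
      _ ≤ Cd * μ (ball x (2 ^ n * r)) := (h x _ (by positivity)).2.1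
      _ ≤ Cd * (Cd ^ n * μ (ball x r)) := by gcongr
      _ = Cd ^ (n + 1) * μ (ball x r) := by ring

theorem tsum_measure_ball_le [OpensMeasurableSpace X] (h : IsDoubling μ Cd) {ι : Type*}
    [Countable ι] {z : ι → X} (hρ : 0 < ρ) (hsep : Pairwise fun i j => ρ ≤ dist (z i) (z j))
    {x : X} (hz : ∀ i, dist (z i) x ≤ R) :
    ∑' i, μ (ball (z i) ρ) ≤ Cd * μ (ball x (R + ρ / 2)) := by
  have hdisj : Pairwise (Function.onFun Disjoint fun i => ball (z i) (ρ / 2)) := fun i j hij =>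
    ball_disjoint_ball ((add_halves ρ).trans_le (hsep hij))
  calc ∑' i, μ (ball (z i) ρ) ≤ ∑' i, Cd * μ (ball (z i) (ρ / 2)) := by
        refine ENNReal.tsum_le_tsum fun i => ?_
        simpa [mul_div_cancel₀] using (h (z i) (ρ / 2) (half_pos hρ)).2.1
    _ = Cd * μ (⋃ i, ball (z i) (ρ / 2)) := by
        rw [ENNReal.tsum_mul_left, measure_iUnion hdisj fun i => measurableSet_ball]
    _ ≤ Cd * μ (ball x (R + ρ / 2)) := by
        gcongr
        exact iUnion_subset fun i => ball_subset_ball' (by linarith [hz i])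

end IsDoubling

end Doubling

section CodimH

variable {μ : Measure X} {R r : ℝ} {A B : Set X}

theorem codimHContent_le_tsum {c : ℕ → X × ℝ} (hA : A ⊆ ⋃ i, ball (c i).1 (c i).2)
    (hc : ∀ i, (c i).2 ≤ R) :
    codimHContent μ R A ≤ ∑' i, μ (ball (c i).1 (c i).2) / ENNReal.ofReal (c i).2 :=
  iInf_le_of_le c (iInf₂_le hA hc)

theorem exists_tsum_lt_of_codimHContent_lt {a : ℝ≥0∞} (h : codimHContent μ R A < a) :
    ∃ c : ℕ → X × ℝ, A ⊆ ⋃ i, ball (c i).1 (c i).2 ∧ (∀ i, (c i).2 ≤ R) ∧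
      ∑' i, μ (ball (c i).1 (c i).2) / ENNReal.ofReal (c i).2 < a := by
  simpa only [codimHContent, iInf_lt_iff, exists_prop] using h

theorem codimHContent_mono (h : A ⊆ B) : codimHContent μ R A ≤ codimHContent μ R B :=
  le_iInf fun _ => le_iInf₂ fun hB hc => codimHContent_le_tsum (h.trans hB) hc

theorem codimHContent_ball_le (hR : 0 ≤ R) (hr : r ≤ R) (x : X) :
    codimHContent μ R (ball x r) ≤ μ (ball x r) / ENNReal.ofReal r := by
  let c : ℕ → X × ℝ := Function.update (fun _ => (x, 0)) 0 (x, r)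
  have hc₀ : c 0 = (x, r) := Function.update_self ..
  have hc (i : ℕ) (hi : i ≠ 0) : c i = (x, 0) := Function.update_of_ne hi ..
  have hcR (i : ℕ) : (c i).2 ≤ R := by
    rcases eq_or_ne i 0 with rfl | hi
    · rwa [hc₀]
    · rwa [hc i hi]
  calc codimHContent μ R (ball x r) ≤ ∑' i, μ (ball (c i).1 (c i).2) / ENNReal.ofReal (c i).2 :=
        codimHContent_le_tsum (subset_iUnion_of_subset 0 (by rw [hc₀])) hcR
    _ = μ (ball x r) / ENNReal.ofReal r := by
        rw [tsum_eq_single 0 fun i hi => by simp [hc i hi], hc₀]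

theorem codimHContent_empty [Nonempty X] (hR : 0 ≤ R) : codimHContent μ R ∅ = 0 := by
  inhabit X
  simpa using codimHContent_ball_le (μ := μ) hR hR default

theorem codimHContent_iUnion_le (s : ℕ → Set X) :
    codimHContent μ R (⋃ n, s n) ≤ ∑' n, codimHContent μ R (s n) := by
  refine ENNReal.le_of_forall_pos_le_add fun ε hε hfin => ?_
  obtain ⟨δ, hδ, hδε⟩ := ENNReal.exists_pos_sum_of_countable' (ENNReal.coe_pos.2 hε).ne' ℕ
  choose c hsc hcR hc using fun n => exists_tsum_lt_of_codimHContent_lt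
    (ENNReal.lt_add_right (ENNReal.ne_top_of_tsum_ne_top hfin.ne n) (hδ n).ne')
  let cost (q : X × ℝ) : ℝ≥0∞ := μ (ball q.1 q.2) / ENNReal.ofReal q.2
  have hcover : ⋃ n, s n ⊆
      ⋃ j : ℕ, ball (c j.unpair.1 j.unpair.2).1 (c j.unpair.1 j.unpair.2).2 := by
    refine iUnion_subset fun n => (hsc n).trans (iUnion_subset fun i => ?_)
    refine subset_iUnion_of_subset (Nat.pair n i) ?_
    rw [Nat.unpair_pair]
  calc codimHContent μ R (⋃ n, s n) ≤ ∑' j : ℕ, cost (c j.unpair.1 j.unpair.2) :=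
        codimHContent_le_tsum hcover fun _ => hcR _ _
    _ = ∑' n, ∑' i, cost (c n i) := by
        rw [← ENNReal.tsum_prod]
        exact Nat.pairEquiv.symm.tsum_eq fun q : ℕ × ℕ => cost (c q.1 q.2)
    _ ≤ ∑' n, (codimHContent μ R (s n) + δ n) := ENNReal.tsum_le_tsum fun n => (hc n).le
    _ ≤ ∑' n, codimHContent μ R (s n) + ε := by
        rw [ENNReal.tsum_add]
        gcongr

/-- The codimension-one restricted Hausdorff content as an outer measure. The empty space is
excluded because it has no balls, so that there the content of `∅` is `∞`. -/
def codimHContentOuterMeasure [Nonempty X] (μ : Measure X) (hR : 0 ≤ R) : OuterMeasure X where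
  measureOf := codimHContent μ R
  empty := codimHContent_empty hR
  mono := codimHContent_mono
  iUnion_nat s _ := codimHContent_iUnion_le s

theorem le_mul_codimHContent {ν : OuterMeasure X} {C : ℝ≥0∞} (hC₀ : C ≠ 0) (hC : C ≠ ⊤)
    (h : ∀ x, ∀ r ≤ R, ν (ball x r) ≤ C * (μ (ball x r) / ENNReal.ofReal r)) (A : Set X) :
    ν A ≤ C * codimHContent μ R A := by
  rw [← ENNReal.inv_mul_le_iff hC₀ hC]
  refine le_iInf fun c => le_iInf₂ fun hA hc => (ENNReal.inv_mul_le_iff hC₀ hC).2 ?_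
  calc ν A ≤ ν (⋃ i, ball (c i).1 (c i).2) := measure_mono hA
    _ ≤ ∑' i, ν (ball (c i).1 (c i).2) := measure_iUnion_le _
    _ ≤ ∑' i, C * (μ (ball (c i).1 (c i).2) / ENNReal.ofReal (c i).2) :=
        ENNReal.tsum_le_tsum fun i => h _ _ (hc i)
    _ = C * ∑' i, μ (ball (c i).1 (c i).2) / ENNReal.ofReal (c i).2 := ENNReal.tsum_mul_left

theorem codimHContent_le_codimH (hR : 0 < R) (A : Set X) : codimHContent μ R A ≤ codimH μ A :=
  le_iSup₂_of_le R hR le_rfl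

theorem codimH_mono (h : A ⊆ B) : codimH μ A ≤ codimH μ B :=
  iSup₂_mono fun _ _ => codimHContent_mono h

end CodimH

section Comparison

variable {μ : Measure X} {Cd : ℝ≥0∞} {K : Set X} {T : NetTree K} {m : ℕ}

namespace NetTree

/-- The term `μ(B(i, r)) / r` that the ball around a node `i` of level `k`, of radius
`r = (1 / 2) ^ k`, contributes to the codimension-one content. -/
def weight (T : NetTree K) (μ : Measure X) (k : ℕ) (i : T.net k) : ℝ≥0∞ :=
  μ (ball i ((1 / 2) ^ k)) / ENNReal.ofReal ((1 / 2) ^ k)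

theorem weight_ne_top (hμ : IsDoubling μ Cd) {k : ℕ} (i : T.net k) : T.weight μ k i ≠ ⊤ :=
  ENNReal.div_ne_top (hμ.measure_ball_lt_top _ (by positivity)).ne
    (ENNReal.ofReal_pos.2 (by positivity)).ne'

theorem codimHContent_image_limit_le [Nonempty X] (hK : IsComplete K) (hμ : IsDoubling μ Cd)
    {R : ℝ} (hR : 4 * (1 / 2) ^ m ≤ R) (F : Set T.branches) :
    codimHContent μ R (T.limit '' F) ≤ Cd ^ 2 * cylinderContent T.node (T.weight μ) m F := by
  have hR₀ : 0 ≤ R := le_trans (by positivity) hR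
  have hCd : Cd ^ 2 ≠ 0 := pow_ne_zero 2 (zero_lt_one.trans_le hμ.one_le).ne'
  have hcyl (k : ℕ) (hk : k ≥ m) (i : T.net k) :
      codimHContent μ R (T.limit '' (T.node k ⁻¹' {i})) ≤ Cd ^ 2 * T.weight μ k i := by
    have hρ : (0 : ℝ) < (1 / 2) ^ k := by positivity
    have hρR : 2 ^ 2 * (1 / 2) ^ k ≤ R := by
      have : (1 / 2 : ℝ) ^ k ≤ (1 / 2) ^ m :=
        pow_le_pow_of_le_one one_half_pos.le one_half_lt_one.le hk
      linarith
    have hball : T.limit '' (T.node k ⁻¹' {i}) ⊆ ball i (2 ^ 2 * (1 / 2) ^ k) := by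
      rintro _ ⟨ω, rfl, rfl⟩
      rw [mem_ball, dist_comm]
      linarith [dist_node_limit_le hK k ω]
    calc codimHContent μ R (T.limit '' (T.node k ⁻¹' {i}))
        ≤ μ (ball i (2 ^ 2 * (1 / 2) ^ k)) / ENNReal.ofReal (2 ^ 2 * (1 / 2) ^ k) :=
          (codimHContent_mono hball).trans (codimHContent_ball_le hR₀ hρR _)
      _ ≤ Cd ^ 2 * μ (ball i ((1 / 2) ^ k)) / ENNReal.ofReal ((1 / 2) ^ k) := by
          gcongr
          · exact hμ.measure_ball_two_pow_mul_le _ hρ 2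
          · linarith
      _ = Cd ^ 2 * T.weight μ k i := mul_div_assoc ..
  exact le_mul_cylinderContent
    (ν := OuterMeasure.comap T.limit (codimHContentOuterMeasure μ hR₀)) hCd
    (ENNReal.pow_ne_top hμ.ne_top) hcyl F

theorem codimH_image_limit_le [Nonempty X] (hK : IsComplete K) (hμ : IsDoubling μ Cd)
    (F : Set T.branches) :
    codimH μ (T.limit '' F) ≤ Cd ^ 2 * ⨆ k, cylinderContent T.node (T.weight μ) k F := by
  refine iSup₂_le fun R hR => ?_
  obtain ⟨k, hk⟩ := exists_pow_lt_of_lt_one (show 0 < R / 4 by positivity) one_half_lt_one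
  calc codimHContent μ R (T.limit '' F)
      ≤ Cd ^ 2 * cylinderContent T.node (T.weight μ) k F :=
        codimHContent_image_limit_le hK hμ (by linarith) F
    _ ≤ Cd ^ 2 * ⨆ k, cylinderContent T.node (T.weight μ) k F := by
        gcongr
        exact le_iSup (fun k => cylinderContent T.node (T.weight μ) k F) k

theorem cylinderContent_preimage_ball_le [OpensMeasurableSpace X] (hK : IsComplete K)
    (hμ : IsDoubling μ Cd) {r : ℝ} (hr : r ≤ (1 / 2) ^ m) (x : X) :
    cylinderContent T.node (T.weight μ) m (T.limit ⁻¹' ball x r) ≤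
      Cd ^ 4 * (μ (ball x r) / ENNReal.ofReal r) := by
  rcases le_or_gt r 0 with hr₀ | hr₀
  · simp [ball_eq_empty.2 hr₀]
  obtain ⟨k, hkr, hrk⟩ := exists_nat_pow_near_of_lt_one hr₀
    (hr.trans (pow_le_one₀ one_half_pos.le one_half_lt_one.le)) one_half_pos one_half_lt_one
  have hmk : m ≤ k := Nat.lt_succ_iff.1
    ((pow_lt_pow_iff_right_of_lt_one₀ one_half_pos one_half_lt_one).1 (hkr.trans_le hr))
  rw [pow_succ] at hkr
  let Q : Set (T.net k) := {i | dist (i : X) x < 5 * r}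
  have hQ : MapsTo (T.node k) (T.limit ⁻¹' ball x r) Q := fun ω hω => by
    have hωx : dist (T.limit ω) x < r := hω
    have htri := dist_triangle (T.node k ω : X) (T.limit ω) x
    have hlim := dist_node_limit_le hK k ω
    exact show dist (T.node k ω : X) x < 5 * r by linarith
  have hQsep : Pairwise fun i j : Q => (1 / 2 : ℝ) ^ k ≤ dist ((i : T.net k) : X) (j : T.net k) :=
    fun i j hij => (T.pairwise_lt_dist k i.1.2 j.1.2
      ((Subtype.coe_injective.comp Subtype.coe_injective).ne hij)).le
  have hsum : ∑' i : Q, μ (ball (i : T.net k) ((1 / 2) ^ k)) ≤ Cd ^ 4 * μ (ball x r) :=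
    calc ∑' i : Q, μ (ball (i : T.net k) ((1 / 2) ^ k))
        ≤ Cd * μ (ball x (5 * r + (1 / 2) ^ k / 2)) :=
          hμ.tsum_measure_ball_le (by positivity) hQsep fun i => i.2.le
      _ ≤ Cd * μ (ball x (2 ^ 3 * r)) := by
          gcongr
          linarith
      _ ≤ Cd * (Cd ^ 3 * μ (ball x r)) := by
          gcongr
          exact hμ.measure_ball_two_pow_mul_le x hr₀ 3
      _ = Cd ^ 4 * μ (ball x r) := by ring
  calc cylinderContent T.node (T.weight μ) m (T.limit ⁻¹' ball x r)
      ≤ ∑' i : Q, T.weight μ k i := cylinderContent_le_tsum hmk hQ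
    _ = (∑' i : Q, μ (ball (i : T.net k) ((1 / 2) ^ k))) / ENNReal.ofReal ((1 / 2) ^ k) := by
        simp only [weight, div_eq_mul_inv, ENNReal.tsum_mul_right]
    _ ≤ Cd ^ 4 * μ (ball x r) / ENNReal.ofReal r := by gcongr
    _ = Cd ^ 4 * (μ (ball x r) / ENNReal.ofReal r) := mul_div_assoc ..

theorem cylinderContent_le_mul_codimH [Nonempty X] [OpensMeasurableSpace X] (hK : IsComplete K)
    (hμ : IsDoubling μ Cd) (m : ℕ) (F : Set T.branches) :
    cylinderContent T.node (T.weight μ) m F ≤ Cd ^ 4 * codimH μ (T.limit '' F) := by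
  have hCd : Cd ^ 4 ≠ 0 := pow_ne_zero 4 (zero_lt_one.trans_le hμ.one_le).ne'
  calc cylinderContent T.node (T.weight μ) m F
      ≤ OuterMeasure.map T.limit (cylinderContent T.node (T.weight μ) m) (T.limit '' F) :=
        measure_mono (subset_preimage_image T.limit F)
    _ ≤ Cd ^ 4 * codimHContent μ ((1 / 2) ^ m) (T.limit '' F) :=
        le_mul_codimHContent hCd (ENNReal.pow_ne_top hμ.ne_top)
          (fun x r hr => cylinderContent_preimage_ball_le hK hμ hr x) _
    _ ≤ Cd ^ 4 * codimH μ (T.limit '' F) := by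
        gcongr
        exact codimHContent_le_codimH (by positivity) _

end NetTree

end Comparison

theorem exists_isCompact_subset_lt_codimH_lt_top [Nonempty X] [OpensMeasurableSpace X]
    {μ : Measure X} {Cd : ℝ≥0∞} (hμ : IsDoubling μ Cd) {K : Set X} (hK : IsCompact K)
    (hpt : ∀ x ∈ K, codimH μ {x} = 0) (htop : codimH μ K = ⊤) {M : ℝ≥0∞} (hM : M < ⊤) :
    ∃ K₀ ⊆ K, IsCompact K₀ ∧ M < codimH μ K₀ ∧ codimH μ K₀ < ⊤ := by
  obtain ⟨T⟩ := NetTree.nonempty_of_totallyBounded hK.totallyBounded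
  have hrange : range T.limit = K := NetTree.range_limit hK.isComplete
  have hpow_lt_top (n : ℕ) : Cd ^ n < ⊤ := ENNReal.pow_lt_top hμ.ne_top.lt_top
  let H (m : ℕ) : OuterMeasure T.branches := cylinderContent T.node (T.weight μ) m
  have hcodimH_le (F : Set T.branches) : codimH μ (T.limit '' F) ≤ Cd ^ 2 * ⨆ m, H m F :=
    NetTree.codimH_image_limit_le hK.isComplete hμ F
  have hle_codimH (m : ℕ) (F : Set T.branches) : H m F ≤ Cd ^ 4 * codimH μ (T.limit '' F) :=
    NetTree.cylinderContent_le_mul_codimH hK.isComplete hμ m F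
  have hsingleton (m : ℕ) (ω : T.branches) : H m {ω} = 0 := by
    simpa [hpt _ (hrange ▸ mem_range_self ω)] using hle_codimH m {ω}
  have hH_top : ⨆ m, H m univ = ⊤ := by
    by_contra hne
    have := hcodimH_le univ
    rw [image_univ, hrange, htop] at this
    exact this.not_gt (ENNReal.mul_lt_top (hpow_lt_top 2) (Ne.lt_top hne))
  obtain ⟨m, hm⟩ : ∃ m, Cd ^ 4 * M < H m univ :=
    lt_iSup_iff.1 (hH_top ▸ ENNReal.mul_lt_top (hpow_lt_top 4) hM)
  obtain ⟨F, -, hF, hle, hsup⟩ := exists_isCompact_subset_iSup_cylinderContent_le_add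
    T.antitone_ker_node T.isLocallyConstant_node isCompact_univ (fun k ω _ => hsingleton k ω) m
    one_ne_zero
  refine ⟨T.limit '' F, (image_subset_range _ _).trans hrange.subset,
    hF.image (NetTree.continuous_limit hK.isComplete), ?_, ?_⟩
  · exact lt_of_mul_lt_mul_left' (hm.trans_le (hle.trans (hle_codimH m F)))
  · exact ((hcodimH_le F).trans (by gcongr)).trans_lt (ENNReal.mul_lt_top (hpow_lt_top 2)
      (ENNReal.add_lt_top.2
        ⟨cylinderContent_lt_top (NetTree.weight_ne_top hμ) univ, ENNReal.one_lt_top⟩))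

theorem codimH_eq_iSup_compact_subsets_general {X : Type u} [MetricSpace X] [Nonempty X]
    [MeasurableSpace X] [OpensMeasurableSpace X] {μ : Measure X} {Cd : ℝ≥0∞}
    (hμ : IsDoubling μ Cd) {K : Set X} (hK : IsCompact K) (hpt : ∀ x ∈ K, codimH μ {x} = 0) :
    (codimH μ K =
      ⨆ (K₀ : Set X) (_ : K₀ ⊆ K) (_ : IsCompact K₀) (_ : codimH μ K₀ < ⊤),
        codimH μ K₀) ∧
    (codimH μ K = ⊤ → ∀ M : ℝ≥0∞, M < ⊤ →
      ∃ K₀ ⊆ K, IsCompact K₀ ∧ M < codimH μ K₀ ∧ codimH μ K₀ < ⊤) := by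
  refine ⟨le_antisymm (le_of_forall_lt fun M hM => ?_) ?_,
    fun htop M hM => exists_isCompact_subset_lt_codimH_lt_top hμ hK hpt htop hM⟩
  · obtain ⟨K₀, hK₀K, hK₀, hMK₀, hK₀top⟩ :
        ∃ K₀ ⊆ K, IsCompact K₀ ∧ M < codimH μ K₀ ∧ codimH μ K₀ < ⊤ := by
      rcases eq_or_ne (codimH μ K) ⊤ with htop | hfin
      · exact exists_isCompact_subset_lt_codimH_lt_top hμ hK hpt htop (hM.trans_le le_top)
      · exact ⟨K, subset_rfl, hK, hM, hfin.lt_top⟩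
    simp only [lt_iSup_iff]
    exact ⟨K₀, hK₀K, hK₀, hK₀top, hMK₀⟩
  · exact iSup₂_le fun K₀ hK₀K => iSup₂_le fun _ _ => codimH_mono hK₀K

/-- existence of compact subsets of finite codimension one
Hausdorff measure. -/
theorem codimH_eq_iSup_compact_subsets {X : Type u} [MetricSpace X] [CompleteSpace X] [Nontrivial X]
    [MeasurableSpace X] [BorelSpace X] (μ : Measure X)
    (Cd : ℝ≥0∞) (hCd : 1 ≤ Cd) (hdoub : IsDoubling μ Cd)
    (K : Set X) (hK : IsCompact K) (hpt : ∀ x ∈ K, codimH μ {x} = 0) :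
    (codimH μ K =
      ⨆ (K₀ : Set X) (_ : K₀ ⊆ K) (_ : IsCompact K₀) (_ : codimH μ K₀ < ⊤),
        codimH μ K₀) ∧
    (codimH μ K = ⊤ → ∀ M : ℝ≥0∞, 0 < M → M < ⊤ →
      ∃ K₀ : Set X, K₀ ⊆ K ∧ IsCompact K₀ ∧ M < codimH μ K₀ ∧ codimH μ K₀ < ⊤) :=
  (codimH_eq_iSup_compact_subsets_general hdoub hK hpt).imp_right fun h htop M _ hM => h htop M hM

end
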